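/- arXiv:1203.4358 — 5 statements merged into one kernel-verified Lean document; each statement's English description precedes it below -/
import Mathlib

section
/- Let C > 0 and let E be the reliability function E(R) = C/2 − R for 0 ≤ R ≤ C/4, E(R) = (√C − √R)² for C/4 ≤ R ≤ C. Then for every R ∈ [0, C], min(2R, E(R)) ≤ C/3, and equality holds if and only if R = C/6. -/
/-- The reliability function of the infinite-bandwidth AWGN channel with capacity `C`:
`E(R) = C/2 − R` for `0 ≤ R ≤ C/4` and `E(R) = (√C − √R)²` for `C/4 ≤ R ≤ C`. -/
noncomputable def awgnE (C R : ℝ) : ℝ :=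
  if R ≤ C / 4 then C / 2 - R else (Real.sqrt C - Real.sqrt R) ^ 2

/-- For `C > 0` and every `R ∈ [0, C]`, `min(2R, E(R)) ≤ C/3`, with equality
if and only if `R = C/6`. -/
theorem min_twoR_awgnE_le (C : ℝ) (hC : 0 < C) :
    ∀ R ∈ Set.Icc (0 : ℝ) C,
      min (2 * R) (awgnE C R) ≤ C / 3 ∧
      (min (2 * R) (awgnE C R) = C / 3 ↔ R = C / 6) := by
  rintro R ⟨h0, h1⟩
  unfold awgnE
  split_ifs with h
  · rcases le_total (2 * R) (C / 2 - R) with h2 | h2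
    · rw [min_eq_left h2]
      exact ⟨by linarith, fun h => by linarith, fun h => by linarith⟩
    · rw [min_eq_right h2]
      exact ⟨by linarith, fun h => by linarith, fun h => by linarith⟩
  · push Not at h
    have hle : Real.sqrt R ≤ Real.sqrt C := Real.sqrt_le_sqrt h1
    have hc := Real.sq_sqrt hC.le
    have hr := Real.sq_sqrt h0
    have hcn := Real.sqrt_nonneg C
    have hrn := Real.sqrt_nonneg R
    have hhalf : Real.sqrt C / 2 ≤ Real.sqrt R := by
      apply Real.le_sqrt_of_sq_le
      nlinarith
    have hE : (Real.sqrt C - Real.sqrt R) ^ 2 ≤ C / 4 := by nlinarith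
    have hm : min (2 * R) ((Real.sqrt C - Real.sqrt R) ^ 2) ≤ C / 4 :=
      (min_le_right _ _).trans hE
    exact ⟨by linarith, fun h => by linarith, fun h => by linarith⟩
end

section
/- Let C > 0, let E be the reliability function E(R) = C/2 − R for 0 ≤ R ≤ C/4, E(R) = (√C − √R)² for C/4 ≤ R ≤ C, and let 0 < α < 1. Then the minimum over R ∈ [0, C] of E(R) + αR equals αC/(1 + α), and it is attained at R = C/(1 + α)². -/
/-- For `C > 0` and `0 < α < 1`, the minimum over `R ∈ [0, C]` of `E(R) + αR` equals
`αC/(1 + α)`, and it is attained at `R = C/(1 + α)²`. -/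
theorem minimum_awgnE_add_mul_of_lt_one (C α : ℝ) (hC : 0 < C) (hα0 : 0 < α) (hα1 : α < 1) :
    IsLeast ((fun R => awgnE C R + α * R) '' Set.Icc (0 : ℝ) C) (α * C / (1 + α)) ∧
    awgnE C (C / (1 + α) ^ 2) + α * (C / (1 + α) ^ 2) = α * C / (1 + α) := by
  have h1 : 0 < 1 + α := by linarith
  have key : awgnE C (C / (1 + α) ^ 2) + α * (C / (1 + α) ^ 2) = α * C / (1 + α) := by
    have hlt : ¬ C / (1 + α) ^ 2 ≤ C / 4 := by
      rw [not_le]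
      apply div_lt_div_of_pos_left hC (by positivity)
      nlinarith
    have hs : Real.sqrt C ^ 2 = C := Real.sq_sqrt hC.le
    have h2 : Real.sqrt (C / (1 + α) ^ 2) = Real.sqrt C / (1 + α) := by
      rw [Real.sqrt_div hC.le, Real.sqrt_sq h1.le]
    rw [awgnE, if_neg hlt, h2]
    generalize Real.sqrt C = s at hs
    subst hs
    field_simp
    ring
  refine ⟨⟨⟨C / (1 + α) ^ 2, ⟨by positivity, ?_⟩, key⟩, ?_⟩, key⟩
  · apply div_le_self hC.le
    nlinarith
  · rintro _ ⟨R, ⟨hR0, hRC⟩, rfl⟩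
    show α * C / (1 + α) ≤ awgnE C R + α * R
    rw [div_le_iff₀ h1, awgnE]
    split_ifs with h
    · have h3 : C * (1 + α) / 4 ≤ C / 2 - R + α * R := by nlinarith
      nlinarith [mul_le_mul_of_nonneg_right h3 h1.le, mul_nonneg hC.le (sq_nonneg (1 - α))]
    · have hs : Real.sqrt C ^ 2 = C := Real.sq_sqrt hC.le
      have ht : Real.sqrt R ^ 2 = R := Real.sq_sqrt hR0
      generalize Real.sqrt C = s at *
      generalize Real.sqrt R = t at *
      subst hs ht
      nlinarith [sq_nonneg ((1 + α) * t - s)]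
end

section
/- Let R and c be real numbers with 0 < R < c, and let T ≥ √R / (2√c · (√c − √R)²). Then the function s ↦ exp(−T·(√s − √R)²) is convex on the interval [c, ∞). -/
/-- For `0 < R < c` and `T ≥ √R / (2√c·(√c − √R)²)`, the function
`s ↦ exp(−T·(√s − √R)²)` is convex on `[c, ∞)`. -/
theorem convexOn_exp_neg_mul_sqrt_sub_sq
    (R c T : ℝ) (hR : 0 < R) (hRc : R < c)
    (hT : Real.sqrt R / (2 * Real.sqrt c * (Real.sqrt c - Real.sqrt R) ^ 2) ≤ T) :
    ConvexOn ℝ (Set.Ici c) (fun s => Real.exp (-T * (Real.sqrt s - Real.sqrt R) ^ 2)) := by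
  have hr : 0 < Real.sqrt R := Real.sqrt_pos.2 hR
  have hrc : Real.sqrt R < Real.sqrt c := Real.sqrt_lt_sqrt hR.le hRc
  generalize Real.sqrt R = r at *
  have hd : 0 < Real.sqrt c - r := by linarith
  have hc : 0 < Real.sqrt c := by linarith
  have hT0 : 0 ≤ T := le_trans (by positivity) hT
  rw [div_le_iff₀ (by positivity)] at hT
  have h1 : ∀ x, c < x → HasDerivAt (fun s => Real.exp (-T * (Real.sqrt s - r) ^ 2))
      (Real.exp (-T * (Real.sqrt x - r) ^ 2) * (-T * (1 - r / Real.sqrt x))) x := by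
    intro x hx
    have hx0 : 0 < x := by linarith
    have hu : 0 < Real.sqrt x := Real.sqrt_pos.2 hx0
    have h := ((((Real.hasDerivAt_sqrt hx0.ne').sub_const r).pow 2).const_mul (-T)).exp
    refine h.congr_deriv ?_
    simp
    field_simp
    simp
  refine convexOn_of_hasDerivWithinAt2_nonneg (convex_Ici c)
    (f' := fun x => Real.exp (-T * (Real.sqrt x - r) ^ 2) * (-T * (1 - r / Real.sqrt x)))
    (f'' := fun x => Real.exp (-T * (Real.sqrt x - r) ^ 2) *
      (T / (2 * Real.sqrt x ^ 3) * (T * (2 * Real.sqrt x * (Real.sqrt x - r) ^ 2) - r)))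
    (by fun_prop) ?_ ?_ ?_
  · intro x hx
    rw [interior_Ici] at hx
    exact (h1 x hx).hasDerivWithinAt
  · intro x hx
    rw [interior_Ici] at hx
    have hx0 : 0 < x := by linarith [Set.mem_Ioi.1 hx]
    have hu : 0 < Real.sqrt x := Real.sqrt_pos.2 hx0
    have h := (h1 x hx).mul ((((hasDerivAt_const x r).div
      (Real.hasDerivAt_sqrt hx0.ne') hu.ne').const_sub 1).const_mul (-T))
    refine (h.congr_deriv ?_).hasDerivWithinAt
    simp only [Pi.div_apply]
    field_simp
    ring
  · intro x hx
    rw [interior_Ici] at hx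
    have hx' := Set.mem_Ioi.1 hx
    have hcu : Real.sqrt c ≤ Real.sqrt x := Real.sqrt_le_sqrt hx'.le
    have hu : 0 < Real.sqrt x := by linarith
    have h2 : T * (2 * Real.sqrt c * (Real.sqrt c - r) ^ 2) ≤
        T * (2 * Real.sqrt x * (Real.sqrt x - r) ^ 2) := by gcongr
    have h3 : 0 ≤ T * (2 * Real.sqrt x * (Real.sqrt x - r) ^ 2) - r := by linarith
    exact mul_nonneg (Real.exp_pos _).le (mul_nonneg (by positivity) h3)
end

section
/- Let Q denote the Gaussian tail function Q(x) = ∫_x^∞ (1/√(2π)) e^{−t²/2} dt. For every σ > 0 and t > 0, ∫₀^∞ (a/σ²) e^{−a²/(2σ²)} Q(a√t) da = (1/π) ∫₀^{π/2} sin²θ / (σ²t + sin²θ) dθ. -/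
open MeasureTheory Real

/-- The Gaussian tail function `Q(x) = ∫_x^∞ (1/√(2π)) e^{−t²/2} dt`. -/
noncomputable def gaussQ (x : ℝ) : ℝ :=
  ∫ t in Set.Ioi x, (1 / Real.sqrt (2 * Real.pi)) * Real.exp (-t ^ 2 / 2)

lemma gq_integrable : Integrable (fun t : ℝ => (1 / Real.sqrt (2 * Real.pi)) * Real.exp (-t ^ 2 / 2)) := by
  have h := (integrable_exp_neg_mul_sq (b := 1/2) (by norm_num)).const_mul (1 / Real.sqrt (2 * Real.pi))
  refine h.congr (Filter.Eventually.of_forall fun x => ?_)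
  simp only []
  congr 2
  ring

lemma gq_zero : gaussQ 0 = 1 / 2 := by
  unfold gaussQ
  rw [integral_const_mul]
  have h := integral_gaussian_Ioi (1/2)
  have e : (fun t : ℝ => Real.exp (-t ^ 2 / 2)) = fun x => Real.exp (-(1/2) * x ^ 2) := by
    funext x; congr 1; ring
  rw [e, h, show π / (1/2) = 2 * π by ring]
  have : Real.sqrt (2 * π) ≠ 0 := by positivity
  field_simp

lemma gq_nonneg (x : ℝ) : 0 ≤ gaussQ x := by
  unfold gaussQ
  exact integral_nonneg fun t => by positivity

lemma gq_deriv (x : ℝ) :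
    HasDerivAt gaussQ (-((1 / Real.sqrt (2 * Real.pi)) * Real.exp (-x ^ 2 / 2))) x := by
  have e : gaussQ = fun y => gaussQ 0 - ∫ t in (0:ℝ)..y, (1 / Real.sqrt (2 * Real.pi)) * Real.exp (-t ^ 2 / 2) := by
    funext y
    have := intervalIntegral.integral_Ioi_sub_Ioi' (a := 0) (b := y) gq_integrable.integrableOn gq_integrable.integrableOn
    rw [← this]
    unfold gaussQ
    ring
  rw [e]
  have hc : Continuous (fun t : ℝ => (1 / Real.sqrt (2 * Real.pi)) * Real.exp (-t ^ 2 / 2)) := by fun_prop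
  exact (hc.integral_hasStrictDerivAt 0 x).hasDerivAt.const_sub _

lemma gq_tendsto : Filter.Tendsto gaussQ Filter.atTop (nhds 0) := by
  have e : gaussQ = fun y => gaussQ 0 - ∫ t in (0:ℝ)..y, (1 / Real.sqrt (2 * Real.pi)) * Real.exp (-t ^ 2 / 2) := by
    funext y
    have := intervalIntegral.integral_Ioi_sub_Ioi' (a := 0) (b := y) gq_integrable.integrableOn gq_integrable.integrableOn
    rw [← this]
    unfold gaussQ
    ring
  rw [e]
  have := intervalIntegral_tendsto_integral_Ioi 0 gq_integrable.integrableOn Filter.tendsto_id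
  simpa [gaussQ] using this.const_sub (gaussQ 0)

lemma gq_lhs (σ s k : ℝ) (hσ : 0 < σ) (hs : 0 < s) (hk : 0 < k) (h : k ^ 2 = 1 / σ ^ 2 + s ^ 2) :
    ∫ a in Set.Ioi (0 : ℝ), (a / σ ^ 2) * Real.exp (-a ^ 2 / (2 * σ ^ 2)) * gaussQ (a * s)
      = 1 / 2 - (s / k) / 2 := by
  have hd : ∀ x ∈ Set.Ici (0:ℝ), HasDerivAt
      (fun a => s / k * gaussQ (a * k) - Real.exp (-a ^ 2 / (2 * σ ^ 2)) * gaussQ (a * s))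
      ((x / σ ^ 2) * Real.exp (-x ^ 2 / (2 * σ ^ 2)) * gaussQ (x * s)) x := by
    intro x _
    have h1 := ((gq_deriv (x * k)).comp x ((hasDerivAt_id x).mul_const k)).const_mul (s / k)
    have h2 := (gq_deriv (x * s)).comp x ((hasDerivAt_id x).mul_const s)
    have h3 : HasDerivAt (fun a : ℝ => Real.exp (-a ^ 2 / (2 * σ ^ 2)))
        (Real.exp (-x ^ 2 / (2 * σ ^ 2)) * (-(2 * x) / (2 * σ ^ 2))) x := by
      have := (((hasDerivAt_pow 2 x).neg).div_const (2 * σ ^ 2)).exp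
      simpa using this
    refine (h1.sub (h3.mul h2)).congr_deriv ?_
    have e : Real.exp (-(x * k) ^ 2 / 2) = Real.exp (-x ^ 2 / (2 * σ ^ 2)) * Real.exp (-(x * s) ^ 2 / 2) := by
      rw [← Real.exp_add, mul_pow, h]
      congr 1
      field_simp
      ring
    simp only [Function.comp, id, e]
    field_simp
    ring
  have hp : ∀ x ∈ Set.Ioi (0:ℝ), 0 ≤ (x / σ ^ 2) * Real.exp (-x ^ 2 / (2 * σ ^ 2)) * gaussQ (x * s) := by
    intro x hx
    have := gq_nonneg (x * s)
    have : 0 < x := hx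
    positivity
  have ht : Filter.Tendsto (fun a => s / k * gaussQ (a * k) - Real.exp (-a ^ 2 / (2 * σ ^ 2)) * gaussQ (a * s))
      Filter.atTop (nhds 0) := by
    have t1 := (gq_tendsto.comp (Filter.tendsto_id.atTop_mul_const hk)).const_mul (s / k)
    have t2 := gq_tendsto.comp (Filter.tendsto_id.atTop_mul_const hs)
    have t3 : Filter.Tendsto (fun a => Real.exp (-a ^ 2 / (2 * σ ^ 2)) * gaussQ (a * s)) Filter.atTop (nhds 0) := by
      refine squeeze_zero (fun a => mul_nonneg (Real.exp_pos _).le (gq_nonneg _)) (fun a => ?_) t2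
      refine mul_le_of_le_one_left (gq_nonneg _) (Real.exp_le_one_iff.2 ?_)
      rw [neg_div]
      have : 0 ≤ a ^ 2 / (2 * σ ^ 2) := by positivity
      linarith
    simpa using t1.sub t3
  rw [integral_Ioi_of_hasDerivAt_of_nonneg' hd hp ht]
  simp [gq_zero]
  ring

lemma gq_rhs (c r : ℝ) (hc : 0 < c) (hr : 0 < r) (h : r ^ 2 * (c + 1) = c) :
    ∫ θ in (0 : ℝ)..(π / 2), Real.sin θ ^ 2 / (c + Real.sin θ ^ 2) = π / 2 - r * (π / 2) := by
  have hd : ∀ x ∈ Set.uIcc 0 (π / 2), HasDerivAt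
      (fun θ => θ - r * (θ + Real.arctan ((1 - r) * (sin θ * cos θ) / (r * cos θ ^ 2 + sin θ ^ 2))))
      (Real.sin x ^ 2 / (c + Real.sin x ^ 2)) x := by
    intro x _
    have hsc := sin_sq_add_cos_sq x
    have hv : 0 < r * cos x ^ 2 + sin x ^ 2 := by
      rcases eq_or_ne (sin x) 0 with h0 | h0
      · have : cos x ^ 2 = 1 := by rw [h0] at hsc; linarith
        rw [this]; positivity
      · positivity
    have hu := ((hasDerivAt_sin x).mul (hasDerivAt_cos x)).const_mul (1 - r)
    have hw := (((hasDerivAt_cos x).pow 2).const_mul r).add ((hasDerivAt_sin x).pow 2)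
    have ha := (hu.div hw hv.ne').arctan
    refine ((hasDerivAt_id x).sub (((hasDerivAt_id x).add ha).const_mul r)).congr_deriv ?_
    simp only [Pi.mul_apply, Pi.add_apply, Pi.pow_apply, Pi.div_apply]
    generalize sin x = S at *
    generalize cos x = C at *
    have hC : C ^ 2 = 1 - S ^ 2 := by linarith
    have hD : 0 < c + S ^ 2 := by positivity
    have hE : ((1 - r) * (S * C)) ^ 2 + (r * C ^ 2 + S ^ 2) ^ 2 = r ^ 2 + (1 - r ^ 2) * S ^ 2 := by
      have : ((1 - r) * (S * C)) ^ 2 + (r * C ^ 2 + S ^ 2) ^ 2 = (1 - r) ^ 2 * S ^ 2 * C ^ 2 + (r * C ^ 2 + S ^ 2) ^ 2 := by ring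
      rw [this, hC]; ring
    have hF : (r ^ 2 + (1 - r ^ 2) * S ^ 2) * (c + 1) = c + S ^ 2 := by linear_combination (1 - S ^ 2) * h
    have hG : r ^ 2 + (1 - r ^ 2) * S ^ 2 = (c + S ^ 2) / (c + 1) := by
      rw [← hF]; field_simp
    have key : ∀ u v N : ℝ, v ≠ 0 → u ^ 2 + v ^ 2 = (c + S ^ 2) / (c + 1) → N = r - (c + S ^ 2) / (c + 1) →
        1 - r * (1 + 1 / (1 + (u / v) ^ 2) * (N / v ^ 2)) = S ^ 2 / (c + S ^ 2) := by
      intro u v N hv huv hN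
      have : 1 / (1 + (u / v) ^ 2) * (N / v ^ 2) = N / (u ^ 2 + v ^ 2) := by
        have : u ^ 2 + v ^ 2 ≠ 0 := by positivity
        have : v ^ 2 + u ^ 2 ≠ 0 := by positivity
        field_simp
        ring
      rw [this, huv, hN]
      field_simp
      linear_combination -h
    refine key _ _ _ hv.ne' (hE.trans hG) ?_
    rw [← hG]
    push_cast
    linear_combination (r * (C ^ 2 + S ^ 2 + 1) - r ^ 2 * (1 + C ^ 2) - S ^ 2) * hC
  rw [intervalIntegral.integral_eq_sub_of_hasDerivAt hd]
  · simp
  · apply Continuous.intervalIntegrable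
    refine Continuous.div (by fun_prop) (by fun_prop) fun x => ?_
    positivity

theorem rayleigh_expectation_gaussQ (σ t : ℝ) (hσ : 0 < σ) (ht : 0 < t) :
    ∫ a in Set.Ioi (0 : ℝ), (a / σ ^ 2) * Real.exp (-a ^ 2 / (2 * σ ^ 2)) *
        gaussQ (a * Real.sqrt t)
      = (1 / π) * ∫ θ in (0 : ℝ)..(π / 2),
          Real.sin θ ^ 2 / (σ ^ 2 * t + Real.sin θ ^ 2) := by
  have hk : 0 < 1 / σ ^ 2 + t := by positivity
  rw [gq_lhs σ (√t) (√(1 / σ ^ 2 + t)) hσ (by positivity) (by positivity)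
    (by rw [Real.sq_sqrt hk.le, Real.sq_sqrt ht.le]),
    gq_rhs (σ ^ 2 * t) (√t / √(1 / σ ^ 2 + t)) (by positivity) (by positivity) ?_]
  · field_simp
  · rw [div_pow, Real.sq_sqrt hk.le, Real.sq_sqrt ht.le]
    field_simp
    ring
end

section
/- Let σ > 0, C > 0 and R > 0, and define E_a(R) = a²C/2 − R for a ≥ 2√(R/C), E_a(R) = (a√C − √R)² for √(R/C) ≤ a ≤ 2√(R/C), and E_a(R) = 0 for 0 ≤ a ≤ √(R/C). Then lim_{T→∞} ∫₀^∞ (a/σ²) e^{−a²/(2σ²)} e^{−T·E_a(R)} da = 1 − e^{−R/(2σ²C)}. -/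
open MeasureTheory Filter

/-- The reliability function of the infinite-bandwidth AWGN channel with capacity `a²C`,
at rate `R`, viewed as a function of the fading gain `a ≥ 0`:
`E_a(R) = a²C/2 − R` for `a ≥ 2√(R/C)`, `E_a(R) = (a√C − √R)²` for
`√(R/C) ≤ a ≤ 2√(R/C)`, and `E_a(R) = 0` for `0 ≤ a ≤ √(R/C)`. -/
noncomputable def fadingE (C R a : ℝ) : ℝ :=
  if a ≤ Real.sqrt (R / C) then 0
  else if a ≤ 2 * Real.sqrt (R / C) then (a * Real.sqrt C - Real.sqrt R) ^ 2
  else a ^ 2 * C / 2 - R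

/-- For `σ > 0`, `C > 0`, `R > 0`, the Rayleigh average of `e^{−T·E_a(R)}` converges,
as `T → ∞`, to the outage probability `1 − e^{−R/(2σ²C)}`. -/
theorem tendsto_rayleigh_fadingE (σ C R : ℝ) (hσ : 0 < σ) (hC : 0 < C) (hR : 0 < R) :
    Tendsto (fun T : ℝ => ∫ a in Set.Ioi (0 : ℝ),
        (a / σ ^ 2) * Real.exp (-a ^ 2 / (2 * σ ^ 2)) * Real.exp (-T * fadingE C R a))
      atTop (nhds (1 - Real.exp (-R / (2 * σ ^ 2 * C)))) := by
  set s := Real.sqrt (R / C) with hs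
  have hs0 : 0 < s := Real.sqrt_pos.mpr (div_pos hR hC)
  have hs2 : s ^ 2 = R / C := Real.sq_sqrt (div_pos hR hC).le
  have hsC : s * Real.sqrt C = Real.sqrt R := by
    rw [hs, Real.sqrt_div hR.le, div_mul_cancel₀ _ (Real.sqrt_pos.mpr hC).ne']
  have hs2C : s ^ 2 * C = R := by
    rw [hs2, div_mul_cancel₀ _ hC.ne']
  set g : ℝ → ℝ := fun a => (a / σ ^ 2) * Real.exp (-a ^ 2 / (2 * σ ^ 2)) with hg
  have hgc : Continuous g := by
    simp only [hg]
    fun_prop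
  have hgi : Integrable g := by
    have h := (integrable_mul_exp_neg_mul_sq (b := 1 / (2 * σ ^ 2)) (by positivity)).div_const (σ ^ 2)
    refine h.congr (Eventually.of_forall fun a => ?_)
    simp only [hg]
    rw [show -(1 / (2 * σ ^ 2)) * a ^ 2 = -a ^ 2 / (2 * σ ^ 2) by ring]
    ring
  have hE0 : ∀ a, a ≤ s → fadingE C R a = 0 := fun a ha => by
    simp only [fadingE, ← hs, if_pos ha]
  have hEpos : ∀ a, s < a → 0 < fadingE C R a := fun a ha => by
    simp only [fadingE, ← hs, if_neg (not_le.mpr ha)]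
    split_ifs with h
    · have : Real.sqrt R < a * Real.sqrt C := by
        rw [← hsC]
        exact mul_lt_mul_of_pos_right ha (Real.sqrt_pos.mpr hC)
      exact pow_pos (sub_pos.mpr this) 2
    · have h1 : (2 * s) ^ 2 < a ^ 2 := pow_lt_pow_left₀ (not_le.mp h) (by positivity) two_ne_zero
      have h2 := mul_lt_mul_of_pos_right h1 hC
      nlinarith
  have hEnn : ∀ a, 0 ≤ fadingE C R a := fun a => by
    rcases le_or_gt a s with h | h
    · exact (hE0 a h).ge
    · exact (hEpos a h).le
  have hEm : Measurable (fadingE C R) := by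
    unfold fadingE
    refine Measurable.ite measurableSet_Iic measurable_const
      (Measurable.ite measurableSet_Iic ?_ ?_) <;> fun_prop
  have hval : ∫ a in Set.Ioi (0 : ℝ), (Set.Iic s).indicator g a
      = 1 - Real.exp (-R / (2 * σ ^ 2 * C)) := by
    rw [setIntegral_indicator measurableSet_Iic, Set.Ioi_inter_Iic,
      ← intervalIntegral.integral_of_le hs0.le,
      intervalIntegral.integral_eq_sub_of_hasDerivAt
        (f := fun a => -Real.exp (-a ^ 2 / (2 * σ ^ 2))) ?_ (hgc.intervalIntegrable _ _)]
    · rw [hs2, show -(R / C) / (2 * σ ^ 2) = -R / (2 * σ ^ 2 * C) by field_simp]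
      simp
      ring
    · intro x _
      have h := ((((hasDerivAt_id x).pow 2).neg.div_const (2 * σ ^ 2)).exp).neg
      refine h.congr_deriv ?_
      simp [hg]
      field_simp
  rw [← hval]
  refine tendsto_integral_filter_of_dominated_convergence (fun a => ‖g a‖) ?_ ?_
    hgi.norm.integrableOn ?_
  · refine Eventually.of_forall fun T => ?_
    exact (hgc.measurable.mul (Real.measurable_exp.comp (hEm.const_mul (-T)))).aestronglyMeasurable
  · filter_upwards [eventually_ge_atTop 0] with T hT
    refine Eventually.of_forall fun a => ?_
    rw [norm_mul]
    refine mul_le_of_le_one_right (norm_nonneg _) ?_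
    rw [Real.norm_eq_abs, Real.abs_exp, Real.exp_le_one_iff]
    have := mul_nonneg hT (hEnn a)
    linarith
  · refine Eventually.of_forall fun a => ?_
    rcases le_or_gt a s with h | h
    · rw [Set.indicator_of_mem (show a ∈ Set.Iic s from h)]
      simp [hE0 a h, hg]
    · rw [Set.indicator_of_notMem (show a ∉ Set.Iic s from not_le.mpr h)]
      have h1 : Tendsto (fun T : ℝ => Real.exp (-T * fadingE C R a)) atTop (nhds 0) := by
        refine Real.tendsto_exp_atBot.comp ?_
        exact tendsto_neg_atTop_atBot.atBot_mul_const (hEpos a h)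
      simpa using h1.const_mul (g a)
end
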